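/- arXiv:1205.0343 — 2 statements merged into one kernel-verified Lean document; each statement's English description precedes it below -/
import Mathlib

section
/- Let k ≥ 2 and n_1, …, n_k be positive integers, let t be the number of indices i with n_i odd, and let I_1 = {i : n_i = 1}. If t is odd, t ≥ 3, and |I_1| ≥ (2k − t + 1)/2, then the signed domination number of the complete k-partite graph K_{n_1,…,n_k} equals 1. -/
open scoped Classical

/-- The signed domination number of a finite simple graph `G`: the minimum weight of a
function `f : V → {−1, 1}` such that `f(N[v]) ≥ 1` for every vertex `v`. -/
noncomputable def signedDomNum {V : Type*} [Fintype V] (G : SimpleGraph V) : ℤ :=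
  sInf {w : ℤ | ∃ f : V → ℤ, (∀ v, f v = 1 ∨ f v = -1) ∧
    (∀ v, 1 ≤ f v + ∑ u ∈ G.neighborFinset v, f u) ∧ w = ∑ v, f v}

/-- In a complete multipartite graph, the neighbors of a vertex are the vertices outside its
part. -/
theorem sum_neighborFinset_completeMultipartiteGraph {k : ℕ} {n : Fin k → ℕ}
    (f : (Σ i, Fin (n i)) → ℤ) (v : Σ i, Fin (n i))
    [Fintype ((SimpleGraph.completeMultipartiteGraph fun i : Fin k => Fin (n i)).neighborSet v)] :
    ∑ u ∈ (SimpleGraph.completeMultipartiteGraph fun i : Fin k => Fin (n i)).neighborFinset v, f u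
      = ∑ u, f u - ∑ j, f ⟨v.1, j⟩ := by
  have hnbr : (SimpleGraph.completeMultipartiteGraph
      fun i : Fin k => Fin (n i)).neighborFinset v = Finset.univ.filter fun u => v.1 ≠ u.1 := by
    ext u
    simp
  have hpart : ∑ j, f ⟨v.1, j⟩ = ∑ u, if v.1 = u.1 then f u else 0 := by
    rw [Fintype.sum_sigma, Finset.sum_eq_single v.1]
    · simp
    · intro i _ hi
      simp [hi.symm]
    · simp
  rw [hnbr, hpart, Finset.sum_filter, ← Finset.sum_sub_distrib]
  refine Finset.sum_congr rfl fun u _ => ?_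
  by_cases h : v.1 = u.1 <;> simp [h]

/-- A part of size `n` whose first `n / 2 + 1` vertices carry `-1` has weight `-1` or `-2`. -/
theorem sum_ite_lt_half_succ {n : ℕ} (hn : 0 < n) :
    ∑ j : Fin n, (if (j : ℕ) < n / 2 + 1 then (-1 : ℤ) else 1) = if Odd n then -1 else -2 := by
  have hsum : ∀ m, ∑ j ∈ Finset.range m, (if j < n / 2 + 1 then (-1 : ℤ) else 1)
      = if m ≤ n / 2 + 1 then -(m : ℤ) else m - 2 * ((n / 2 : ℕ) + 1) := by
    intro m
    induction m with
    | zero => simp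
    | succ m ih =>
      rw [Finset.sum_range_succ, ih]
      split_ifs <;> push_cast <;> omega
  rw [Fin.sum_univ_eq_sum_range (fun j => if j < n / 2 + 1 then (-1 : ℤ) else 1), hsum]
  simp only [Nat.odd_iff]
  split_ifs <;> omega

theorem signedDomNum_eq_one_of_many_singletons
    (k : ℕ) (hk : 2 ≤ k) (n : Fin k → ℕ) (hn : ∀ i, 0 < n i)
    (t : ℕ) (ht : t = (Finset.univ.filter fun i => Odd (n i)).card)
    (htodd : Odd t) (ht3 : 3 ≤ t)
    (hI : 2 * ((Finset.univ.filter fun i => n i = 1).card : ℤ) ≥ 2 * (k : ℤ) - (t : ℤ) + 1) :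
    signedDomNum (SimpleGraph.completeMultipartiteGraph fun i : Fin k => Fin (n i)) = 1 := by
  have htk : t ≤ k := by
    rw [ht]
    exact (Finset.card_le_univ _).trans (by simp)
  obtain ⟨r, hr⟩ := htodd
  obtain ⟨P, hPsub, hPcard⟩ := Finset.exists_subset_card_eq
    (s := Finset.univ.filter fun i => n i = 1) (n := k - r) (by omega)
  have hP : ∀ i ∈ P, n i = 1 := fun i hi => (Finset.mem_filter.mp (hPsub hi)).2
  refine IsLeast.csInf_eq ⟨?_, ?_⟩
  · let f : (Σ i, Fin (n i)) → ℤ := fun v =>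
      if v.1 ∈ P then 1 else if (v.2 : ℕ) < n v.1 / 2 + 1 then -1 else 1
    have hf : ∀ v, f v = 1 ∨ f v = -1 := by
      intro v
      simp only [f]
      split_ifs <;> simp
    have hpart : ∀ i, ∑ j, f ⟨i, j⟩
        = (if i ∈ P then 2 else 0) + (if Odd (n i) then 1 else 0) - 2 := by
      intro i
      by_cases hi : i ∈ P
      · simp [f, hi, hP i hi]
      · simp only [f, hi, if_false]
        rw [sum_ite_lt_half_succ (hn i)]
        split_ifs <;> norm_num
    have hsum : ∑ v, f v = 1 := by
      rw [Fintype.sum_sigma]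
      simp only [hpart]
      rw [Finset.sum_sub_distrib, Finset.sum_add_distrib, Finset.sum_boole, ← ht,
        ← Finset.sum_filter]
      simp [hPcard]
      omega
    refine ⟨f, hf, fun v => ?_, hsum.symm⟩
    rw [sum_neighborFinset_completeMultipartiteGraph, hsum, hpart]
    by_cases hv : v.1 ∈ P
    · simp [f, hv, hP _ hv]
    · have := hf v
      simp only [hv, if_false]
      split_ifs <;> omega
  · rintro w ⟨f, -, hdom, rfl⟩
    have hne : (Finset.univ.filter fun i => n i = 1).Nonempty :=
      Finset.card_pos.mp (by omega)
    obtain ⟨i, hi⟩ := hne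
    have hi1 : n i = 1 := (Finset.mem_filter.mp hi).2
    have : Subsingleton (Fin (n i)) := by
      rw [hi1]
      infer_instance
    have h := hdom ⟨i, ⟨0, hn i⟩⟩
    rw [sum_neighborFinset_completeMultipartiteGraph,
      Fintype.sum_subsingleton _ (⟨0, hn i⟩ : Fin (n i))] at h
    linarith
end

section
/- Let n_1 be an odd integer with n_1 ≥ 5 and let n_2 be an even integer with n_2 ≥ 4. Then the signed domination number of the complete bipartite graph K_{n_1,n_2} equals 5. -/
open scoped Classical

lemma sum_neighborFinset_completeBipartiteGraph_inl {α β : Type*} [Fintype α] [Fintype β]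
    (f : α ⊕ β → ℤ) (a : α) :
    ∑ u ∈ (completeBipartiteGraph α β).neighborFinset (Sum.inl a), f u = ∑ b, f (Sum.inr b) := by
  have h : (completeBipartiteGraph α β).neighborFinset (Sum.inl a) =
      Finset.univ.map Function.Embedding.inr := by
    ext (x | x) <;> simp
  rw [h, Finset.sum_map]
  rfl

lemma sum_neighborFinset_completeBipartiteGraph_inr {α β : Type*} [Fintype α] [Fintype β]
    (f : α ⊕ β → ℤ) (b : β) :
    ∑ u ∈ (completeBipartiteGraph α β).neighborFinset (Sum.inr b), f u = ∑ a, f (Sum.inl a) := by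
  have h : (completeBipartiteGraph α β).neighborFinset (Sum.inr b) =
      Finset.univ.map Function.Embedding.inl := by
    ext (x | x) <;> simp
  rw [h, Finset.sum_map]
  rfl

lemma two_dvd_sum_sub_card_of_sign {α : Type*} [Fintype α] (g : α → ℤ)
    (hg : ∀ a, g a = 1 ∨ g a = -1) : 2 ∣ ∑ a, g a - Fintype.card α := by
  have h : ∑ a, g a - Fintype.card α = ∑ a, (g a - 1) := by simp [Finset.sum_sub_distrib]
  rw [h]
  refine Finset.dvd_sum fun a _ => ?_
  rcases hg a with h | h <;> simp [h]

lemma exists_eq_neg_one_or_sum_eq_card {α : Type*} [Fintype α] (g : α → ℤ)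
    (hg : ∀ a, g a = 1 ∨ g a = -1) : (∃ a, g a = -1) ∨ ∑ a, g a = Fintype.card α := by
  by_cases h : ∃ a, g a = -1
  · exact Or.inl h
  · push Not at h
    right
    simp [fun a => (hg a).resolve_right (h a)]

lemma exists_sign_sum_eq {n m : ℕ} (h : 2 * m ≤ n) :
    ∃ g : Fin n → ℤ, (∀ i, g i = 1 ∨ g i = -1) ∧ ∑ i, g i = n - 2 * m := by
  refine ⟨fun i => if (i : ℕ) < m then -1 else 1, fun i => ?_, ?_⟩
  · by_cases hi : (i : ℕ) < m <;> simp [hi]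
  · rw [Fin.sum_univ_eq_sum_range (fun i => if i < m then (-1 : ℤ) else 1) n]
    obtain ⟨k, rfl⟩ := Nat.exists_eq_add_of_le (show m ≤ n by omega)
    rw [Finset.sum_range_add, Finset.sum_congr rfl
      (fun i hi => if_pos (Finset.mem_range.mp hi))]
    simp
    ring

theorem signedDomNum_completeBipartite_odd_even
    (n₁ n₂ : ℕ) (h₁ : Odd n₁) (h₁' : 5 ≤ n₁) (h₂ : Even n₂) (h₂' : 4 ≤ n₂) :
    signedDomNum (completeBipartiteGraph (Fin n₁) (Fin n₂)) = 5 := by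
  refine IsLeast.csInf_eq ⟨?_, ?_⟩
  · obtain ⟨k, rfl⟩ := h₁
    obtain ⟨l, rfl⟩ := h₂
    obtain ⟨g, hg, hgs⟩ := exists_sign_sum_eq (n := 2 * k + 1) (m := k - 1) (by omega)
    obtain ⟨h, hh, hhs⟩ := exists_sign_sum_eq (n := l + l) (m := l - 1) (by omega)
    refine ⟨Sum.elim g h, ?_, ?_, ?_⟩
    · rintro (a | b)
      exacts [hg a, hh b]
    · rintro (a | b)
      · rw [sum_neighborFinset_completeBipartiteGraph_inl]
        simp only [Sum.elim_inl, Sum.elim_inr, hhs]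
        have := hg a
        omega
      · rw [sum_neighborFinset_completeBipartiteGraph_inr]
        simp only [Sum.elim_inl, Sum.elim_inr, hgs]
        have := hh b
        omega
    · simp only [Fintype.sum_sum_type, Sum.elim_inl, Sum.elim_inr, hgs, hhs]
      omega
  · rintro w ⟨f, hf, hdom, rfl⟩
    rw [Fintype.sum_sum_type]
    have hdom₁ (a : Fin n₁) := hdom (Sum.inl a)
    have hdom₂ (b : Fin n₂) := hdom (Sum.inr b)
    simp only [sum_neighborFinset_completeBipartiteGraph_inl] at hdom₁
    simp only [sum_neighborFinset_completeBipartiteGraph_inr] at hdom₂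
    have hpar₁ := two_dvd_sum_sub_card_of_sign (fun a => f (Sum.inl a)) fun a => hf _
    have hcase₁ := exists_eq_neg_one_or_sum_eq_card (fun a => f (Sum.inl a)) fun a => hf _
    have hcase₂ := exists_eq_neg_one_or_sum_eq_card (fun b => f (Sum.inr b)) fun b => hf _
    simp only [Fintype.card_fin] at hpar₁ hcase₁ hcase₂
    have hd₁ := hdom₁ ⟨0, by omega⟩
    have hd₂ := hdom₂ ⟨0, by omega⟩
    have hs₁ := hf (Sum.inl ⟨0, by omega⟩)
    have hs₂ := hf (Sum.inr ⟨0, by omega⟩)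
    obtain ⟨k, rfl⟩ := h₁
    rcases hcase₁ with ⟨a, ha⟩ | h₁ <;> rcases hcase₂ with ⟨b, hb⟩ | h₂
    · have := hdom₁ a
      have := hdom₂ b
      omega
    · omega
    · omega
    · omega
end
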